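/- Let K and L be number fields with rings of integers 𝓞_K and 𝓞_L, and let 𝔪 be a nonzero ideal of 𝓞_K and 𝔫 a nonzero ideal of 𝓞_L. Suppose that for every real s > 1, Σ_{I} N(I)^{−s} = Σ_{J} N(J)^{−s}, where the left sum is over all nonzero ideals I of 𝓞_K with I + 𝔪 = 𝓞_K and the right sum is over all nonzero ideals J of 𝓞_L with J + 𝔫 = 𝓞_L. Then for every real s > 1, Σ_{I} N(I)^{−s} = Σ_{J} N(J)^{−s}, where now the sums run over all nonzero ideals I of 𝓞_K and all nonzero ideals J of 𝓞_L; that is, the Dedekind zeta functions of K and L agree on (1,∞). -/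

import Mathlib

open scoped NumberField

/-!
The coefficients of a Dirichlet series are determined by its values on `(1, ∞)`, so the hypothesis
says that `K` and `L` have the same number of primes of norm `p` for every rational prime `p` not
dividing `N(𝔪) N(𝔫)`. Choose a number field `N` containing `K` and `L`, Galois over `ℚ` with group
`G`, and let `U` and `V` be the subgroups fixing `K` and `L`. At an unramified prime `p` with
Frobenius element `σ`, the number of primes of norm `p` of `K` is the value `π_U(σ)` of the
permutation character of `G` on `G ⧸ U`, so `π_U` and `π_V` agree on almost all Frobenius elements.

Chebotarev's theorem is not needed to conclude that `π_U = π_V`. The pole at `1` of the zeta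
function of the fixed field of any `W ≤ G` shows that the Dirichlet mean of `π_W` over Frobenius
elements is its average over `G`. This extends to every permutation character by decomposing
`G`-sets into orbits, hence to `(π_U - π_V) ^ 2`, a combination of the permutation characters of
products of `G ⧸ U` and `G ⧸ V`. Its mean vanishes, so its sum over `G` is zero, and so is every
term of that sum.

Finally, `π_U` determines the number of points of `𝓞 K` over every finite field, also at ramified
primes, by a twisted Burnside count over the inertia group. These numbers determine how many primes
of each norm `K` has, and with them the Euler product.
-/

section TwistedBurnside

variable {H Z Y : Type*} [Group H] [MulAction H Z]

theorem card_smul_eq_of_mem_orbit {z z' : Z} (h : z' ∈ MulAction.orbit H z) :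
    Nat.card {g : H // z' = g • z} = Nat.card (MulAction.stabilizer H z) := by
  obtain ⟨v, rfl⟩ := h
  refine Nat.card_congr ((Equiv.mulLeft v⁻¹).subtypeEquiv fun g ↦ ?_)
  rw [MulAction.mem_stabilizer_iff, Equiv.coe_mulLeft, mul_smul, inv_smul_eq_iff, eq_comm]

theorem sum_card_stabilizer_orbit (z : Z) [Fintype (MulAction.orbit H z)] :
    ∑ z' : MulAction.orbit H z, Nat.card (MulAction.stabilizer H (z' : Z)) = Nat.card H := by
  have hconst : ∀ z' : MulAction.orbit H z,
      Nat.card (MulAction.stabilizer H (z' : Z)) = Nat.card (MulAction.stabilizer H z) := fun z' ↦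
    Nat.card_congr (MulAction.stabilizerEquivStabilizerOfOrbitRel z'.2).toEquiv
  rw [Finset.sum_congr rfl fun z' _ ↦ hconst z', Finset.sum_const, Finset.card_univ, smul_eq_mul,
    ← Nat.card_eq_fintype_card, ← Nat.card_prod]
  exact Nat.card_congr (MulAction.orbitProdStabilizerEquivGroup H z)

theorem sum_card_twisted_fixedPoints [Finite Z] [Fintype H] {F : Z → Z} {f : Y → Y} {π : Z → Y}
    (hπ : Function.Surjective π) (hF : Function.Semiconj π F f)
    (hfiber : ∀ z z', π z' = π z ↔ z' ∈ MulAction.orbit H z) :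
    ∑ h : H, Nat.card {z : Z // F z = h • z} =
      Nat.card H * Nat.card (Function.fixedPoints f) := by
  classical
  have := Fintype.ofFinite Z
  have : Finite Y := Finite.of_surjective π hπ
  have := Fintype.ofFinite Y
  have hcount (z : Z) : Nat.card {h : H // F z = h • z} =
      if f (π z) = π z then Nat.card (MulAction.stabilizer H z) else 0 := by
    split_ifs with hz
    · exact card_smul_eq_of_mem_orbit ((hfiber _ _).mp (by rw [hF.eq, hz]))
    · refine Nat.card_eq_zero.mpr (.inl ⟨fun ⟨h, hh⟩ ↦ hz ?_⟩)
      rw [← hF.eq, (hfiber _ _).mpr ⟨h, hh.symm⟩]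
  have hfibersum (y : Y) :
      ∑ z : {z // π z = y}, Nat.card (MulAction.stabilizer H (z : Z)) = Nat.card H := by
    obtain ⟨z₀, rfl⟩ := hπ y
    rw [← sum_card_stabilizer_orbit z₀]
    exact Fintype.sum_equiv (Equiv.subtypeEquivRight fun z ↦ hfiber z₀ z) _ _ fun _ ↦ rfl
  calc ∑ h : H, Nat.card {z : Z // F z = h • z}
      = ∑ z : Z, Nat.card {h : H // F z = h • z} := by
        simp only [Nat.card_eq_fintype_card, Fintype.card_subtype, Finset.card_filter]
        exact Finset.sum_comm
    _ = ∑ y : Y, ∑ z : {z // π z = y}, if f y = y then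
          Nat.card (MulAction.stabilizer H (z : Z)) else 0 := by
        rw [← Fintype.sum_fiberwise π]
        refine Finset.sum_congr rfl fun y _ ↦ Finset.sum_congr rfl fun z _ ↦ ?_
        rw [hcount, z.2]
    _ = ∑ y : Y, if f y = y then Nat.card H else 0 := by
        refine Finset.sum_congr rfl fun y _ ↦ ?_
        split_ifs
        · exact hfibersum y
        · exact Finset.sum_const_zero
    _ = Nat.card H * Nat.card (Function.fixedPoints f) := by
        rw [← Finset.sum_filter, Finset.sum_const, smul_eq_mul, mul_comm, ← Fintype.card_subtype,
          ← Nat.card_eq_fintype_card]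
        rfl

end TwistedBurnside

section Homomorphisms

variable {A B Ω G : Type*} [CommRing B] [CommRing Ω] [IsDomain Ω] [Group G] [Finite G]
  [MulSemiringAction G B]

theorem exists_apply_smul_eq_apply {z z' : B →+* Ω}
    (h : ∀ b : B, (∀ g : G, g • b = b) → z b = z' b) (b : B) : ∃ g : G, z (g • b) = z' b := by
  have := Fintype.ofFinite G
  have hmap : (MulSemiringAction.charpoly G b).map z = (MulSemiringAction.charpoly G b).map z' := by
    ext n
    rw [Polynomial.coeff_map, Polynomial.coeff_map]
    exact h _ fun g ↦ MulSemiringAction.smul_coeff_charpoly b n g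
  have hroot : ((MulSemiringAction.charpoly G b).map z).eval (z' b) = 0 := by
    rw [hmap, Polynomial.eval_map_apply, MulSemiringAction.eval_charpoly, map_zero]
  rw [MulSemiringAction.charpoly_eq, Polynomial.map_prod, Polynomial.eval_prod,
    Finset.prod_eq_zero_iff] at hroot
  obtain ⟨g, -, hg⟩ := hroot
  exact ⟨g, by simpa [sub_eq_zero, eq_comm (a := z' b)] using hg⟩

-- If `z ∘ g` and `z'` differ at `b g` for every `g`, then the polynomial with coefficients `b g`
-- contradicts the elementwise statement for `B[X]`.
theorem exists_forall_apply_smul_eq_apply {z z' : B →+* Ω}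
    (h : ∀ b : B, (∀ g : G, g • b = b) → z b = z' b) : ∃ g : G, ∀ b, z (g • b) = z' b := by
  classical
  by_contra! hcon
  choose b hb using hcon
  have := Fintype.ofFinite G
  let e := Fintype.equivFin G
  let P : Polynomial B := ∑ g : G, Polynomial.monomial (e g : ℕ) (b g)
  have hP (g : G) : P.coeff (e g) = b g := by
    simp [P, Polynomial.finsetSum_coeff, Polynomial.coeff_monomial, Fin.val_inj]
  obtain ⟨g, hg⟩ := exists_apply_smul_eq_apply (G := G) (z := Polynomial.mapRingHom z)
    (z' := Polynomial.mapRingHom z') (fun Q hQ ↦ by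
      ext n
      simp only [Polynomial.coe_mapRingHom, Polynomial.coeff_map]
      exact h _ fun g ↦ by rw [← Polynomial.coeff_smul, hQ g]) P
  have hcoeff := congrArg (fun Q ↦ Q.coeff (e g)) hg
  simp only [Polynomial.coe_mapRingHom, Polynomial.coeff_map, Polynomial.coeff_smul, hP] at hcoeff
  exact hb g hcoeff

variable [CommRing A] [Algebra A B]

theorem exists_forall_apply_smul_eq_of_comp_algebraMap_eq [Algebra.IsInvariant A B G]
    {z z' : B →+* Ω} (h : z.comp (algebraMap A B) = z'.comp (algebraMap A B)) :
    ∃ g : G, ∀ b, z (g • b) = z' b := by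
  refine exists_forall_apply_smul_eq_apply fun b hb ↦ ?_
  obtain ⟨a, rfl⟩ := Algebra.IsInvariant.isInvariant (A := A) (G := G) b hb
  exact DFunLike.congr_fun h a

end Homomorphisms

theorem surjective_comp_algebraMap_of_isIntegral {A B Ω : Type*} [CommRing A] [CommRing B]
    [Algebra A B] [Algebra.IsIntegral A B] [FaithfulSMul A B] [Field Ω] [IsAlgClosed Ω] :
    Function.Surjective fun ψ : B →+* Ω ↦ ψ.comp (algebraMap A B) := by
  intro φ
  have : (RingHom.ker φ).IsPrime := RingHom.ker_isPrime φ
  obtain ⟨Q, -, hQ, hQP⟩ := Ideal.exists_ideal_over_prime_of_isIntegral (S := B)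
    (RingHom.ker φ) ⊥ (by
    intro a ha
    obtain rfl : a = 0 := by simpa [FaithfulSMul.algebraMap_eq_zero_iff] using ha
    exact zero_mem _)
  have : Q.LiesOver (RingHom.ker φ) := ⟨hQP.symm⟩
  let : Algebra (A ⧸ RingHom.ker φ) Ω := (RingHom.kerLift φ).toAlgebra
  have : FaithfulSMul (A ⧸ RingHom.ker φ) Ω :=
    (faithfulSMul_iff_algebraMap_injective _ _).mpr (RingHom.kerLift_injective φ)
  have : Module.IsTorsionFree (A ⧸ RingHom.ker φ) (B ⧸ Q) := FaithfulSMul.to_isTorsionFree _ _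
  let ψ : (B ⧸ Q) →ₐ[A ⧸ RingHom.ker φ] Ω := IsAlgClosed.lift
  exact ⟨ψ.toRingHom.comp (Ideal.Quotient.mk Q),
    RingHom.ext fun a ↦ ψ.commutes (Ideal.Quotient.mk _ a)⟩

section CosetPoint

variable {A B Ω G : Type*} [CommRing A] [CommRing B] [Algebra A B] [CommRing Ω]
  [Group G] [MulSemiringAction G B] {U : Subgroup G}

variable (A U) in
/-- The point `a ↦ z (g • a)` of a subring `A` of `B` fixed by `U`, for a point `z : B →+* Ω` and a
coset `g U`. -/
def cosetPoint [SMulCommClass U A B] (z : B →+* Ω) : G ⧸ U → A →+* Ω :=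
  Quotient.lift
    (fun g ↦ (z.comp (MulSemiringAction.toRingHom G B g)).comp (algebraMap A B)) fun g g' h ↦ by
      ext a
      have hfix : (g⁻¹ * g') • algebraMap A B a = algebraMap A B a :=
        smul_algebraMap (⟨_, QuotientGroup.leftRel_apply.mp h⟩ : U) a
      rw [mul_smul, inv_smul_eq_iff] at hfix
      exact congrArg z hfix.symm

variable [SMulCommClass U A B] {z : B →+* Ω}

theorem semiconj_cosetPoint {φ : Ω →+* Ω} {σ : G} (hσ : ∀ b, φ (z b) = z (σ • b)) :
    Function.Semiconj (cosetPoint A U z) (σ • ·) φ.comp := by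
  rintro ⟨g⟩
  ext a
  exact (congrArg z (mul_smul σ g _)).trans (hσ _).symm

theorem mem_inertia_ker_iff {g : G} :
    g ∈ (RingHom.ker z).inertia G ↔ ∀ b, z (g • b) = z b := by
  simp only [AddSubgroup.mem_inertia, Submodule.mem_toAddSubgroup, RingHom.mem_ker, map_sub,
    sub_eq_zero]

theorem cosetPoint_eq_iff_mem_orbit [Finite U] [IsDomain Ω] [Algebra.IsInvariant A B U]
    (q q' : G ⧸ U) : cosetPoint A U z q' = cosetPoint A U z q ↔
      q' ∈ MulAction.orbit ((RingHom.ker z).inertia G) q := by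
  induction q using QuotientGroup.induction_on with | H x
  constructor
  · induction q' using QuotientGroup.induction_on with | H y
    intro h
    obtain ⟨u, hu⟩ := exists_forall_apply_smul_eq_of_comp_algebraMap_eq (A := A) (G := U) h
    replace hu (b : B) : z (y • (u : G) • b) = z (x • b) := hu b
    refine ⟨⟨y * u * x⁻¹, mem_inertia_ker_iff.mpr fun b ↦ ?_⟩, ?_⟩
    · rw [mul_smul, mul_smul, hu, smul_inv_smul]
    · refine QuotientGroup.eq.mpr ?_
      simp [mul_assoc]
  · rintro ⟨i, rfl⟩
    ext a
    exact (congrArg z (mul_smul (i : G) x _)).trans (mem_inertia_ker_iff.mp i.2 _)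

end CosetPoint

section FixedPoints

variable {A B Ω G : Type*} [CommRing A] [CommRing B] [Algebra A B] [Field Ω] [IsAlgClosed Ω]
  [Group G] [Finite G] [MulSemiringAction G B] [Algebra.IsInvariant ℤ B G]
  {U : Subgroup G} [SMulCommClass U A B] [Algebra.IsInvariant A B U] [FaithfulSMul A B]

theorem surjective_cosetPoint (z : B →+* Ω) : Function.Surjective (cosetPoint A U z) := by
  intro ψ
  have := Algebra.IsInvariant.isIntegral A B U
  obtain ⟨ψ', rfl⟩ := surjective_comp_algebraMap_of_isIntegral (B := B) ψ
  obtain ⟨g, hg⟩ := exists_forall_apply_smul_eq_of_comp_algebraMap_eq (A := ℤ) (G := G) (z := z)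
    (z' := ψ') (RingHom.ext_int _ _)
  exact ⟨g, RingHom.ext fun a ↦ hg _⟩

theorem card_inertia_mul_card_fixedPoints_comp {z : B →+* Ω} {φ : Ω →+* Ω} {σ : G}
    [Fintype ((RingHom.ker z).inertia G)] (hσ : ∀ b, φ (z b) = z (σ • b)) :
    Nat.card ((RingHom.ker z).inertia G) *
        Nat.card (Function.fixedPoints (φ.comp : (A →+* Ω) → A →+* Ω)) =
      ∑ i : (RingHom.ker z).inertia G, Nat.card (MulAction.fixedBy (G ⧸ U) ((i : G)⁻¹ * σ)) := by
  rw [← sum_card_twisted_fixedPoints (surjective_cosetPoint (U := U) z) (semiconj_cosetPoint hσ)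
    cosetPoint_eq_iff_mem_orbit]
  refine Finset.sum_congr rfl fun i _ ↦ Nat.card_congr (Equiv.subtypeEquivRight fun q ↦ ?_)
  rw [MulAction.mem_fixedBy, mul_smul, inv_smul_eq_iff]
  rfl

end FixedPoints

section PointCount

/-- The number of points of a ring `R` over the field with `p ^ k` elements: the number of
homomorphisms to an algebraic closure of `𝔽_p` that are fixed by the `p ^ k`-power Frobenius. -/
noncomputable def finiteFieldPointCount (R : Type*) [CommRing R] (p : ℕ) [Fact p.Prime] (k : ℕ) :
    ℕ :=
  Nat.card (Function.fixedPoints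
    ((iterateFrobenius (AlgebraicClosure (ZMod p)) p k).comp : (R →+* _) → R →+* _))

variable {B G : Type*} [CommRing B] [Group G] [Finite G] [MulSemiringAction G B]
  [Algebra.IsInvariant ℤ B G]

theorem exists_iterateFrobenius_apply_eq_apply_pow_smul {Ω : Type*} [CommRing Ω] [IsDomain Ω]
    (p : ℕ) [ExpChar Ω p] (z : B →+* Ω) :
    ∃ σ : G, ∀ k b, iterateFrobenius Ω p k (z b) = z (σ ^ k • b) := by
  obtain ⟨σ, hσ⟩ := exists_forall_apply_smul_eq_of_comp_algebraMap_eq (A := ℤ) (G := G) (z := z)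
    (z' := (frobenius Ω p).comp z) (RingHom.ext_int _ _)
  refine ⟨σ, fun k ↦ ?_⟩
  induction k with
  | zero => simp
  | succ k ih =>
    intro b
    rw [add_comm, iterateFrobenius_add_apply, ih, iterateFrobenius_one_apply, pow_add, pow_one,
      mul_smul, hσ, RingHom.comp_apply, frobenius_def]

variable {A A' : Type*} [CommRing A] [Algebra A B] [FaithfulSMul A B] {U : Subgroup G}
  [SMulCommClass U A B] [Algebra.IsInvariant A B U]
  [CommRing A'] [Algebra A' B] [FaithfulSMul A' B] {V : Subgroup G}
  [SMulCommClass V A' B] [Algebra.IsInvariant A' B V]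

theorem card_inertia_mul_finiteFieldPointCount {p : ℕ} [Fact p.Prime]
    {z : B →+* AlgebraicClosure (ZMod p)} [Fintype ((RingHom.ker z).inertia G)] {σ : G}
    (hσ : ∀ k b, iterateFrobenius (AlgebraicClosure (ZMod p)) p k (z b) = z (σ ^ k • b)) (k : ℕ) :
    Nat.card ((RingHom.ker z).inertia G) * finiteFieldPointCount A p k =
      ∑ i : (RingHom.ker z).inertia G,
        Nat.card (MulAction.fixedBy (G ⧸ U) ((i : G)⁻¹ * σ ^ k)) :=
  card_inertia_mul_card_fixedPoints_comp (hσ k)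

theorem finiteFieldPointCount_eq_card_fixedBy {p : ℕ} [Fact p.Prime]
    {z : B →+* AlgebraicClosure (ZMod p)} (hz : (RingHom.ker z).inertia G = ⊥) {σ : G}
    (hσ : ∀ k b, iterateFrobenius (AlgebraicClosure (ZMod p)) p k (z b) = z (σ ^ k • b)) :
    finiteFieldPointCount A p 1 = Nat.card (MulAction.fixedBy (G ⧸ U) σ) := by
  have := Fintype.ofFinite ((RingHom.ker z).inertia G)
  have : Subsingleton ((RingHom.ker z).inertia G) := hz ▸ inferInstance
  have hcount := card_inertia_mul_finiteFieldPointCount (A := A) (U := U) hσ 1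
  rw [Nat.card_of_subsingleton 1, one_mul, Fintype.sum_subsingleton _ 1] at hcount
  simpa using hcount

theorem finiteFieldPointCount_eq_of_card_fixedBy_eq [FaithfulSMul ℤ B]
    (h : ∀ g : G, Nat.card (MulAction.fixedBy (G ⧸ U) g) = Nat.card (MulAction.fixedBy (G ⧸ V) g))
    (p : ℕ) [Fact p.Prime] (k : ℕ) :
    finiteFieldPointCount A p k = finiteFieldPointCount A' p k := by
  have := Algebra.IsInvariant.isIntegral ℤ B G
  obtain ⟨z, -⟩ := surjective_comp_algebraMap_of_isIntegral (B := B)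
    (Int.castRingHom (AlgebraicClosure (ZMod p)))
  have := Fintype.ofFinite ((RingHom.ker z).inertia G)
  obtain ⟨σ, hσ⟩ := exists_iterateFrobenius_apply_eq_apply_pow_smul (G := G) p z
  refine Nat.eq_of_mul_eq_mul_left (Nat.card_pos (α := (RingHom.ker z).inertia G)) ?_
  rw [card_inertia_mul_finiteFieldPointCount (U := U) hσ,
    card_inertia_mul_finiteFieldPointCount (U := V) hσ]
  exact Finset.sum_congr rfl fun i _ ↦ h _

end PointCount

theorem exists_ne_zero_forall_notMem_inertia_eq_bot (B G : Type*) [CommRing B] [IsDomain B]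
    [Group G] [Finite G] [MulSemiringAction G B] [FaithfulSMul G B] [Algebra.IsIntegral ℤ B] :
    ∃ n : ℕ, n ≠ 0 ∧ ∀ P : Ideal B, (n : B) ∉ P → P.inertia G = ⊥ := by
  classical
  have := Fintype.ofFinite G
  have hmoved (g : G) (hg : g ≠ 1) : ∃ b : B, g • b - b ≠ 0 := by
    contrapose! hg
    exact FaithfulSMul.eq_of_smul_eq_smul (α := B) fun b ↦ by rw [one_smul, sub_eq_zero.mp (hg b)]
  choose! b hb using hmoved
  let d : B := ∏ g ∈ Finset.univ.erase (1 : G), (g • b g - b g)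
  have hd : d ≠ 0 := Finset.prod_ne_zero_iff.mpr fun g hg ↦ hb g (Finset.ne_of_mem_erase hg)
  obtain ⟨m, hm, hm0⟩ := Submodule.exists_mem_ne_zero_of_ne_bot (Ideal.comap_ne_bot_of_integral_mem
    hd (Ideal.mem_span_singleton_self d) (Algebra.IsIntegral.isIntegral (R := ℤ) d))
  rw [Ideal.mem_comap, Ideal.mem_span_singleton] at hm
  refine ⟨m.natAbs, Int.natAbs_ne_zero.mpr hm0, fun P hP ↦ ?_⟩
  refine (Subgroup.eq_bot_iff_forall _).mpr fun g hg ↦ by_contra fun hg1 ↦ hP ?_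
  have hdP : d ∈ P :=
    P.mem_of_dvd (Finset.dvd_prod_of_mem _ (Finset.mem_erase.mpr ⟨hg1, Finset.mem_univ g⟩)) (hg _)
  have hmP : (m : B) ∈ P := P.mem_of_dvd hm hdP
  obtain h | h := m.natAbs_eq
  · rw [h] at hmP; simpa using hmP
  · rw [h] at hmP; simpa using hmP

section FiniteField

variable {p f : ℕ} [Fact p.Prime]

theorem finrank_zmod_eq_of_card_eq_pow {F : Type*} [Field F] [Finite F] [Algebra (ZMod p) F]
    (hF : Nat.card F = p ^ f) : Module.finrank (ZMod p) F = f := by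
  have hcard := Module.natCard_eq_pow_finrank (K := ZMod p) (V := F)
  rw [hF, Nat.card_zmod] at hcard
  exact (Nat.pow_right_injective (Fact.out : p.Prime).two_le hcard).symm

theorem card_ringHom_algebraicClosure_zmod {F : Type*} [Field F] [Finite F]
    (hF : Nat.card F = p ^ f) : Nat.card (F →+* AlgebraicClosure (ZMod p)) = f := by
  have := Fintype.ofFinite F
  have : CharP F p := charP_of_card_eq_prime_pow (by rwa [← Nat.card_eq_fintype_card])
  let := ZMod.algebra F p
  rw [← finrank_zmod_eq_of_card_eq_pow hF, ← AlgHom.card (ZMod p) F (AlgebraicClosure (ZMod p)),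
    ← Nat.card_eq_fintype_card]
  exact Nat.card_congr
    { toFun φ := { φ with commutes' := RingHom.congr_fun (Subsingleton.elim
        (φ.comp (algebraMap (ZMod p) F)) (algebraMap (ZMod p) _)) }
      invFun φ := φ.toRingHom }

theorem forall_pow_eq_self_iff_dvd {F : Type*} [Field F] [Finite F] (hF : Nat.card F = p ^ f)
    (k : ℕ) : (∀ x : F, x ^ p ^ k = x) ↔ f ∣ k := by
  have := Fintype.ofFinite F
  have : CharP F p := charP_of_card_eq_prime_pow (by rwa [← Nat.card_eq_fintype_card])
  let := ZMod.algebra F p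
  rw [← finrank_zmod_eq_of_card_eq_pow hF, ← FiniteField.orderOf_frobeniusAlgHom,
    orderOf_dvd_iff_pow_eq_one, AlgHom.ext_iff]
  refine forall_congr' fun x ↦ ?_
  rw [AlgHom.coe_pow, FiniteField.coe_frobeniusAlgHom, pow_iterate, ZMod.card, AlgHom.one_apply]

variable {R : Type*} [CommRing R]

theorem card_ringHom_ker_eq {P : Ideal R} [P.IsMaximal] [Finite (R ⧸ P)]
    (hP : Nat.card (R ⧸ P) = p ^ f) :
    Nat.card {φ : R →+* AlgebraicClosure (ZMod p) // RingHom.ker φ = P} = f := by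
  let := Ideal.Quotient.field P
  rw [← card_ringHom_algebraicClosure_zmod hP]
  refine Nat.card_congr
    { toFun φ := Ideal.Quotient.lift P φ.1 fun a ha ↦ by rwa [← φ.2] at ha
      invFun ψ := ⟨ψ.comp (Ideal.Quotient.mk P), ?_⟩
      left_inv φ := Subtype.ext (RingHom.ext fun _ ↦ rfl)
      right_inv ψ := Ideal.Quotient.ringHom_ext (RingHom.ext fun _ ↦ rfl) }
  rw [← RingHom.comap_ker, (RingHom.injective_iff_ker_eq_bot ψ).mp ψ.injective,
    ← RingHom.ker_eq_comap_bot, Ideal.mk_ker]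

theorem iterateFrobenius_comp_eq_self_iff_dvd {φ : R →+* AlgebraicClosure (ZMod p)}
    [(RingHom.ker φ).IsMaximal] [Finite (R ⧸ RingHom.ker φ)]
    (hφ : Nat.card (R ⧸ RingHom.ker φ) = p ^ f) (k : ℕ) :
    (iterateFrobenius _ p k).comp φ = φ ↔ f ∣ k := by
  let := Ideal.Quotient.field (RingHom.ker φ)
  rw [← forall_pow_eq_self_iff_dvd hφ, RingHom.ext_iff, Ideal.Quotient.mk_surjective.forall]
  refine forall_congr' fun x ↦ ?_
  rw [← (RingHom.kerLift_injective φ).eq_iff, map_pow]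
  rfl

end FiniteField

section PrimeCount

open IsDedekindDomain

variable {E : Type*} [Field E] [NumberField E]

variable (E) in
/-- The number of nonzero prime ideals of norm `q` in the ring of integers of `E`. -/
noncomputable def primeCount (q : ℕ) : ℕ :=
  Nat.card {P : HeightOneSpectrum (𝓞 E) // Ideal.absNorm P.asIdeal = q}

instance finite_absNorm_heightOneSpectrum_eq (q : ℕ) :
    Finite {P : HeightOneSpectrum (𝓞 E) // Ideal.absNorm P.asIdeal = q} :=
  (Ring.HasFiniteQuotients.finite_absNorm_heightOneSpectrum_le q).subset fun _ h ↦ le_of_eq h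

theorem ringHom_ker_ne_bot {Ω : Type*} [Field Ω] {p : ℕ} [Fact p.Prime] [CharP Ω p]
    (φ : 𝓞 E →+* Ω) : RingHom.ker φ ≠ ⊥ := by
  intro h
  have hp : (p : 𝓞 E) ∈ RingHom.ker φ := by simp [RingHom.mem_ker]
  rw [h, Ideal.mem_bot, Nat.cast_eq_zero] at hp
  exact (Fact.out : p.Prime).ne_zero hp

instance finite_ringHom_ringOfIntegers (Ω : Type*) [Field Ω] : Finite (𝓞 E →+* Ω) :=
  .of_equiv _ (RingHom.equivIntAlgHom _ _).symm

theorem card_ringHom_le_finrank (Ω : Type*) [Field Ω] :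
    Nat.card (𝓞 E →+* Ω) ≤ Module.finrank ℚ E := by
  rw [← NumberField.RingOfIntegers.rank, Nat.card_congr (RingHom.equivIntAlgHom _ _)]
  exact card_algHom_le_finrank ℤ (𝓞 E) Ω

variable {p : ℕ} [Fact p.Prime]

theorem card_ringHom_ker_eq_asIdeal {P : HeightOneSpectrum (𝓞 E)} {f : ℕ}
    (hP : Ideal.absNorm P.asIdeal = p ^ f) :
    Nat.card {φ : 𝓞 E →+* AlgebraicClosure (ZMod p) // RingHom.ker φ = P.asIdeal} = f :=
  have := P.isMaximal
  have := P.asIdeal.finiteQuotientOfFreeOfNeBot P.ne_bot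
  card_ringHom_ker_eq hP

variable (E) in
theorem card_ringHom_absNorm_ker_eq (f : ℕ) :
    Nat.card {φ : 𝓞 E →+* AlgebraicClosure (ZMod p) // Ideal.absNorm (RingHom.ker φ) = p ^ f} =
      f * primeCount E (p ^ f) := by
  have := Fintype.ofFinite {P : HeightOneSpectrum (𝓞 E) // Ideal.absNorm P.asIdeal = p ^ f}
  let kerPrime (φ : 𝓞 E →+* AlgebraicClosure (ZMod p)) : HeightOneSpectrum (𝓞 E) :=
    ⟨RingHom.ker φ, RingHom.ker_isPrime φ, ringHom_ker_ne_bot (p := p) φ⟩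
  have hfiber (P : {P : HeightOneSpectrum (𝓞 E) // Ideal.absNorm P.asIdeal = p ^ f}) :
      Nat.card {φ // kerPrime φ = P} = f := by
    simp only [kerPrime, HeightOneSpectrum.ext_iff, card_ringHom_ker_eq_asIdeal P.2]
  have e : (Σ P : {P : HeightOneSpectrum (𝓞 E) // Ideal.absNorm P.asIdeal = p ^ f},
      {φ // kerPrime φ = P}) ≃
        {φ : 𝓞 E →+* AlgebraicClosure (ZMod p) // Ideal.absNorm (RingHom.ker φ) = p ^ f} :=
    Equiv.sigmaSubtypeFiberEquivSubtype kerPrime fun φ ↦ Iff.rfl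
  rw [← Nat.card_congr e, Nat.card_sigma, Finset.sum_congr rfl fun P _ ↦ hfiber P,
    Finset.sum_const, smul_eq_mul, mul_comm, Finset.card_univ, ← Nat.card_eq_fintype_card,
    primeCount]

theorem exists_absNorm_ker_eq_pow (φ : 𝓞 E →+* AlgebraicClosure (ZMod p)) :
    ∃ f, Ideal.absNorm (RingHom.ker φ) = p ^ f := by
  have := (RingHom.ker_isPrime φ).isMaximal (ringHom_ker_ne_bot (p := p) φ)
  obtain ⟨q, f, -, hq, hqprime, hf⟩ := Ideal.exists_prime_and_absNorm_eq_pow (RingHom.ker φ)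
  rw [RingHom.mem_ker, map_natCast, CharP.cast_eq_zero_iff _ p,
    Nat.prime_dvd_prime_iff_eq Fact.out hqprime] at hq
  exact ⟨f, hq ▸ hf⟩

theorem iterateFrobenius_comp_eq_self_iff_of_absNorm {φ : 𝓞 E →+* AlgebraicClosure (ZMod p)}
    {f : ℕ} (hf : Ideal.absNorm (RingHom.ker φ) = p ^ f) (k : ℕ) :
    (iterateFrobenius _ p k).comp φ = φ ↔ f ∣ k :=
  have := (RingHom.ker_isPrime φ).isMaximal (ringHom_ker_ne_bot (p := p) φ)
  iterateFrobenius_comp_eq_self_iff_dvd hf k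

theorem finiteFieldPointCount_eq_sum_divisors {k : ℕ} (hk : k ≠ 0) :
    finiteFieldPointCount (𝓞 E) p k = ∑ f ∈ k.divisors, f * primeCount E (p ^ f) := by
  let points (f : k.divisors) : Type _ :=
    {φ : 𝓞 E →+* AlgebraicClosure (ZMod p) // Ideal.absNorm (RingHom.ker φ) = p ^ (f : ℕ)}
  have hpoints (f : k.divisors) (φ : points f) : (iterateFrobenius _ p k).comp φ.1 = φ.1 :=
    (iterateFrobenius_comp_eq_self_iff_of_absNorm φ.2 k).mpr (Nat.dvd_of_mem_divisors f.2)
  have hbij : Function.Bijective fun φ : Σ f, points f ↦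
      (⟨φ.2.1, hpoints φ.1 φ.2⟩ : Function.fixedPoints (iterateFrobenius _ p k).comp) := by
    constructor
    · rintro ⟨⟨f, _⟩, φ, hf⟩ ⟨⟨f', _⟩, φ', hf'⟩ h
      obtain rfl : φ = φ' := congrArg Subtype.val h
      obtain rfl : f = f' :=
        Nat.pow_right_injective (Fact.out : p.Prime).two_le (hf.symm.trans hf')
      rfl
    · rintro ⟨φ, hφ⟩
      obtain ⟨f, hf⟩ := exists_absNorm_ker_eq_pow φ
      have hfk := (iterateFrobenius_comp_eq_self_iff_of_absNorm hf k).mp hφ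
      exact ⟨⟨⟨f, Nat.mem_divisors.mpr ⟨hfk, hk⟩⟩, φ, hf⟩, rfl⟩
  rw [finiteFieldPointCount, ← Nat.card_eq_of_bijective _ hbij, Nat.card_sigma,
    ← Finset.sum_coe_sort k.divisors fun f ↦ f * primeCount E (p ^ f)]
  exact Finset.sum_congr rfl fun f _ ↦ card_ringHom_absNorm_ker_eq E f

theorem finiteFieldPointCount_one : finiteFieldPointCount (𝓞 E) p 1 = primeCount E p := by
  rw [finiteFieldPointCount_eq_sum_divisors one_ne_zero, Nat.divisors_one, Finset.sum_singleton,
    one_mul, pow_one]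

theorem primeCount_eq_zero_of_not_isPrimePow {q : ℕ} (hq : ¬ IsPrimePow q) :
    primeCount E q = 0 := by
  refine Nat.card_eq_zero.mpr (.inl ⟨fun ⟨P, hP⟩ ↦ hq ?_⟩)
  obtain ⟨p, f, hf, -, hp, hpf⟩ := Ideal.exists_prime_and_absNorm_eq_pow P.asIdeal
  exact (isPrimePow_nat_iff q).mpr ⟨p, f, hp, hf, hpf.symm.trans hP⟩

variable {K L : Type*} [Field K] [NumberField K] [Field L] [NumberField L]

theorem primeCount_pow_eq_of_finiteFieldPointCount_eq
    (h : ∀ k, finiteFieldPointCount (𝓞 K) p k = finiteFieldPointCount (𝓞 L) p k) {f : ℕ}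
    (hf : f ≠ 0) : primeCount K (p ^ f) = primeCount L (p ^ f) := by
  induction f using Nat.strong_induction_on with
  | _ f ih =>
    have hsum := h f
    rw [finiteFieldPointCount_eq_sum_divisors hf, finiteFieldPointCount_eq_sum_divisors hf,
      ← Nat.insert_self_properDivisors hf, Finset.sum_insert Nat.self_notMem_properDivisors,
      Finset.sum_insert Nat.self_notMem_properDivisors, Finset.sum_congr rfl fun d hd ↦ by
        rw [ih d (Nat.mem_properDivisors.mp hd).2 (Nat.pos_of_mem_properDivisors hd).ne'],
      Nat.add_right_cancel_iff] at hsum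
    exact Nat.eq_of_mul_eq_mul_left (Nat.pos_of_ne_zero hf) hsum

theorem primeCount_eq_of_finiteFieldPointCount_eq
    (h : ∀ (p : ℕ) [Fact p.Prime] (k : ℕ),
      finiteFieldPointCount (𝓞 K) p k = finiteFieldPointCount (𝓞 L) p k) (q : ℕ) :
    primeCount K q = primeCount L q := by
  by_cases hq : IsPrimePow q
  · obtain ⟨p, f, hp, hf, rfl⟩ := (isPrimePow_nat_iff q).mp hq
    have : Fact p.Prime := ⟨hp⟩
    exact primeCount_pow_eq_of_finiteFieldPointCount_eq (h p) hf.ne'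
  · rw [primeCount_eq_zero_of_not_isPrimePow hq, primeCount_eq_zero_of_not_isPrimePow hq]

theorem exists_equiv_absNorm_eq (h : ∀ q, primeCount K q = primeCount L q) :
    ∃ e : HeightOneSpectrum (𝓞 K) ≃ HeightOneSpectrum (𝓞 L),
      ∀ P, Ideal.absNorm (e P).asIdeal = Ideal.absNorm P.asIdeal := by
  have e (q : ℕ) := (Finite.card_eq.mp (h q)).some
  refine ⟨(Equiv.sigmaFiberEquiv
    fun P : HeightOneSpectrum (𝓞 K) ↦ Ideal.absNorm P.asIdeal).symm.trans
    ((Equiv.sigmaCongrRight e).trans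
      (Equiv.sigmaFiberEquiv fun P : HeightOneSpectrum (𝓞 L) ↦ Ideal.absNorm P.asIdeal)),
    fun P ↦ ?_⟩
  exact (e _ ⟨P, rfl⟩).2

end PrimeCount

section Fibers

variable {X ι : Type*} {w : X → ι} [∀ i, Finite {x // w x = i}]

theorem hasSum_fiber (v : ι → ℝ) (i : ι) :
    HasSum (fun x : {x // w x = i} ↦ v (w x)) (Nat.card {x // w x = i} * v i) := by
  cases nonempty_fintype {x // w x = i}
  convert hasSum_fintype _
  rw [Finset.sum_congr rfl fun x _ ↦ by rw [x.2], Finset.sum_const, nsmul_eq_mul,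
    Nat.card_eq_fintype_card, Finset.card_univ]

theorem hasSum_card_fiber_mul {v : ι → ℝ} {a : ℝ} (h : HasSum (fun x ↦ v (w x)) a) :
    HasSum (fun i ↦ Nat.card {x // w x = i} * v i) a :=
  ((Equiv.sigmaFiberEquiv w).hasSum_iff.mpr h).sigma fun i ↦ hasSum_fiber v i

theorem hasSum_subtype_card_fiber_mul {S : Set ι} {v : ι → ℝ} {a : ℝ}
    (h : HasSum (fun x : w ⁻¹' S ↦ v (w x)) a) :
    HasSum (fun i : S ↦ Nat.card {x // w x = i} * v i) a := by
  have hind : HasSum (fun x ↦ S.indicator v (w x)) a :=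
    (hasSum_subtype_iff_indicator (f := v ∘ w)).mp h
  refine (hasSum_subtype_iff_indicator (f := fun i ↦ Nat.card {x // w x = i} * v i)).mpr ?_
  convert hasSum_card_fiber_mul hind using 2 with i
  exact Set.indicator_mul_right _ _ _

theorem summable_comp_iff_summable_card_fiber_mul {v : ι → ℝ} (hv : ∀ i, 0 ≤ v i) :
    Summable (fun x ↦ v (w x)) ↔ Summable fun i ↦ Nat.card {x // w x = i} * v i := by
  refine (Equiv.sigmaFiberEquiv w).summable_iff.symm.trans ?_
  refine (summable_sigma_of_nonneg fun _ ↦ hv _).trans ?_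
  refine (and_iff_right fun i ↦ (hasSum_fiber v i).summable).trans ?_
  exact summable_congr fun i ↦ (hasSum_fiber v i).tsum_eq

end Fibers

section DirichletSeries

open Filter

variable {X Y : Type*} {w : X → ℕ} {v : Y → ℕ}

theorem term_natCard_fiber (hw : ∀ x, w x ≠ 0) (s : ℝ) (n : ℕ) :
    LSeries.term (fun n ↦ (Nat.card {x // w x = n} : ℂ)) s n =
      ((Nat.card {x // w x = n} * (n : ℝ) ^ (-s) : ℝ) : ℂ) := by
  rcases eq_or_ne n 0 with rfl | hn
  · have : IsEmpty {x // w x = 0} := ⟨fun x ↦ hw x x.2⟩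
    simp
  · rw [LSeries.term_of_ne_zero hn, Complex.ofReal_mul, Complex.ofReal_cpow (Nat.cast_nonneg n),
      Complex.ofReal_neg, Complex.cpow_neg, div_eq_mul_inv]
    simp

variable [∀ n, Finite {x // w x = n}] [∀ n, Finite {y // v y = n}]

theorem LSeriesSummable_natCard_fiber_iff (hw : ∀ x, w x ≠ 0) (s : ℝ) :
    LSeriesSummable (fun n ↦ (Nat.card {x // w x = n} : ℂ)) s ↔
      Summable fun x ↦ (w x : ℝ) ^ (-s) := by
  rw [LSeriesSummable, funext (term_natCard_fiber hw s), Complex.summable_ofReal,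
    summable_comp_iff_summable_card_fiber_mul (v := fun n : ℕ ↦ (n : ℝ) ^ (-s))
      fun n ↦ by positivity]

theorem LSeries_natCard_fiber (hw : ∀ x, w x ≠ 0) {s : ℝ}
    (h : Summable fun x ↦ (w x : ℝ) ^ (-s)) :
    LSeries (fun n ↦ (Nat.card {x // w x = n} : ℂ)) s = ((∑' x, (w x : ℝ) ^ (-s) : ℝ) : ℂ) := by
  rw [LSeries, funext (term_natCard_fiber hw s), ← Complex.ofReal_tsum,
    (hasSum_card_fiber_mul (v := fun n : ℕ ↦ (n : ℝ) ^ (-s)) h.hasSum).tsum_eq]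

theorem abscissaOfAbsConv_natCard_fiber_lt_top (hw : ∀ x, w x ≠ 0) {s : ℝ}
    (h : Summable fun x ↦ (w x : ℝ) ^ (-s)) :
    LSeries.abscissaOfAbsConv (fun n ↦ (Nat.card {x // w x = n} : ℂ)) < ⊤ :=
  ((LSeriesSummable_natCard_fiber_iff hw s).mpr h).abscissaOfAbsConv_le.trans_lt
    (EReal.coe_lt_top _)

theorem natCard_fiber_eq_of_tsum_rpow_eq (hw : ∀ x, w x ≠ 0) (hv : ∀ y, v y ≠ 0)
    (hws : ∀ s : ℝ, 1 < s → Summable fun x ↦ (w x : ℝ) ^ (-s))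
    (hvs : ∀ s : ℝ, 1 < s → Summable fun y ↦ (v y : ℝ) ^ (-s))
    (h : ∀ s : ℝ, 1 < s → ∑' x, (w x : ℝ) ^ (-s) = ∑' y, (v y : ℝ) ^ (-s)) {n : ℕ} (hn : n ≠ 0) :
    Nat.card {x // w x = n} = Nat.card {y // v y = n} := by
  refine Nat.cast_injective (R := ℂ) (LSeries.eq_of_LSeries_eventually_eq
    (f := fun n ↦ (Nat.card {x // w x = n} : ℂ)) (g := fun n ↦ (Nat.card {y // v y = n} : ℂ))
    (abscissaOfAbsConv_natCard_fiber_lt_top hw (hws 2 one_lt_two))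
    (abscissaOfAbsConv_natCard_fiber_lt_top hv (hvs 2 one_lt_two)) ?_ hn)
  filter_upwards [eventually_gt_atTop 1] with s hs
  rw [LSeries_natCard_fiber hw (hws s hs), LSeries_natCard_fiber hv (hvs s hs), h s hs]

end DirichletSeries

section EulerProduct

open Filter

variable {ι : Type*}

/-- Splitting the exponent of `a` off an exponent vector supported in `insert a T`. -/
noncomputable def supportSubsetInsertEquiv [DecidableEq ι] {a : ι} {T : Finset ι} (ha : a ∉ T) :
    {n : ι →₀ ℕ // n.support ⊆ insert a T} ≃ ℕ × {n : ι →₀ ℕ // n.support ⊆ T} where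
  toFun n := (n.1 a, ⟨n.1.erase a, by
    rw [Finsupp.support_erase]
    exact Finset.subset_insert_iff.mp n.2⟩)
  invFun n := ⟨n.2.1.update a n.1,
    (Finsupp.support_update_subset _ _).trans (Finset.insert_subset_insert a n.2.2)⟩
  left_inv n := by ext; simp
  right_inv n := by
    have : n.2.1 a = 0 := Finsupp.notMem_support_iff.mp fun h ↦ ha (n.2.2 h)
    ext <;> simp [this]

theorem hasSum_indicator_finsupp_prod_pow {x : ι → ℝ} (hx : ∀ i, 0 ≤ x i) (hx1 : ∀ i, x i < 1)
    (T : Finset ι) :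
    HasSum (Set.indicator {n : ι →₀ ℕ | n.support ⊆ T} fun n ↦ n.prod fun i k ↦ x i ^ k)
      (∏ i ∈ T, (1 - x i)⁻¹) := by
  classical
  rw [← hasSum_subtype_iff_indicator]
  induction T using Finset.induction_on with
  | empty =>
    have hzero : {n : ι →₀ ℕ | n.support ⊆ ∅} = {0} := by
      ext n
      simp
    rw [hzero, Finset.prod_empty]
    simpa using hasSum_unique ((fun n : ι →₀ ℕ ↦ n.prod fun i k ↦ x i ^ k) ∘
      ((↑) : ({0} : Set (ι →₀ ℕ)) → ι →₀ ℕ))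
  | insert a T ha ih =>
    rw [Finset.prod_insert ha]
    have hgeom := hasSum_geometric_of_lt_one (hx a) (hx1 a)
    have hmul := hgeom.mul ih (hgeom.summable.mul_of_nonneg ih.summable
      (fun k ↦ pow_nonneg (hx a) k) fun n ↦ Finset.prod_nonneg fun i _ ↦ pow_nonneg (hx i) _)
    refine ((supportSubsetInsertEquiv ha).hasSum_iff.mpr hmul).congr_fun fun n ↦ ?_
    exact (Finsupp.mul_prod_erase' n.1 a _ fun i ↦ pow_zero (x i)).symm

theorem hasProd_inv_one_sub {x : ι → ℝ} (hx : ∀ i, 0 ≤ x i) (hx1 : ∀ i, x i < 1)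
    (hs : Summable fun n : ι →₀ ℕ ↦ n.prod fun i k ↦ x i ^ k) :
    HasProd (fun i ↦ (1 - x i)⁻¹) (∑' n : ι →₀ ℕ, n.prod fun i k ↦ x i ^ k) := by
  rw [HasProd, SummationFilter.unconditional_filter]
  simp_rw [← (hasSum_indicator_finsupp_prod_pow hx hx1 _).tsum_eq]
  refine tendsto_tsum_of_dominated_convergence hs (fun n ↦ ?_) (.of_forall fun T n ↦ ?_)
  · refine tendsto_const_nhds.congr' ?_
    filter_upwards [eventually_ge_atTop n.support] with T hT
    rw [Set.indicator_of_mem (by exact hT)]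
  · have hnonneg : 0 ≤ n.prod fun i k ↦ x i ^ k :=
      Finset.prod_nonneg fun i _ ↦ pow_nonneg (hx i) _
    refine (norm_indicator_le_norm_self _ _).trans ?_
    rw [Real.norm_of_nonneg hnonneg]

end EulerProduct

section IdealSums

open Filter Topology IsDedekindDomain

variable {E : Type*} [Field E] [NumberField E]

instance (n : ℕ) : Finite {I : {I : Ideal (𝓞 E) // I ≠ 0} // Ideal.absNorm I.1 = n} :=
  have : Finite {I : Ideal (𝓞 E) // Ideal.absNorm I = n} := Ideal.finite_setOfPred_absNorm_eq n
  Finite.of_injective (fun I ↦ (⟨I.1.1, I.2⟩ : {I : Ideal (𝓞 E) // Ideal.absNorm I = n}))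
    fun I J h ↦ by simpa [Subtype.ext_iff] using h

theorem absNorm_ne_zero_of_ne_zero (I : {I : Ideal (𝓞 E) // I ≠ 0}) : Ideal.absNorm I.1 ≠ 0 :=
  fun h ↦ I.2 (Ideal.absNorm_eq_zero_iff.mp h)

theorem natCard_ne_zero_ideal_absNorm_eq {n : ℕ} (hn : n ≠ 0) :
    Nat.card {I : {I : Ideal (𝓞 E) // I ≠ 0} // Ideal.absNorm I.1 = n} =
      Nat.card {I : Ideal (𝓞 E) // Ideal.absNorm I = n} :=
  Nat.card_congr
    { toFun I := ⟨I.1.1, I.2⟩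
      invFun I := ⟨⟨I.1, fun h ↦ hn (by rw [← I.2, h, Ideal.zero_eq_bot, Ideal.absNorm_bot])⟩, I.2⟩
      left_inv _ := rfl
      right_inv _ := rfl }

variable (E) in
theorem tendsto_sum_natCard_ideal_div :
    Tendsto (fun n : ℕ ↦ (∑ k ∈ Finset.Icc 1 n,
      (Nat.card {I : Ideal (𝓞 E) // Ideal.absNorm I = k} : ℝ)) / n) atTop
      (𝓝 (NumberField.dedekindZeta_residue E)) := by
  refine ((NumberField.Ideal.tendsto_norm_le_div_atTop₀ E).comp tendsto_natCast_atTop_atTop).congr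
    fun n ↦ ?_
  simp only [Function.comp_apply, Nat.cast_le, ← Nat.cast_sum]
  congr
  rw [← add_left_inj 1, ← Ideal.card_norm_le_eq_card_norm_le_add_one,
    show Finset.Icc 1 n = Finset.Ioc 0 n from Finset.Icc_succ_left_eq_Ioc _ _,
    show 1 = Nat.card {I : Ideal (𝓞 E) // Ideal.absNorm I = 0} by simp [Ideal.absNorm_eq_zero_iff],
    Finset.sum_Ioc_add_eq_sum_Icc (n.zero_le),
    ← Finset.card_preimage_eq_sum_card_image_eq (fun k _ ↦ Ideal.finite_setOfPred_absNorm_eq k)]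
  simp [Set.coe_eq_subtype]

theorem summable_absNorm_rpow {s : ℝ} (hs : 1 < s) :
    Summable fun I : {I : Ideal (𝓞 E) // I ≠ 0} ↦ (Ideal.absNorm I.1 : ℝ) ^ (-s) := by
  rw [← LSeriesSummable_natCard_fiber_iff absNorm_ne_zero_of_ne_zero]
  have hO : (fun n : ℕ ↦ ∑ k ∈ Finset.Icc 1 n,
      (Nat.card {I : Ideal (𝓞 E) // Ideal.absNorm I = k} : ℝ)) =O[atTop]
      fun n ↦ (n : ℝ) ^ (1 : ℝ) := by
    simp_rw [Real.rpow_one]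
    refine Asymptotics.isBigO_of_div_tendsto_nhds ?_ _ (tendsto_sum_natCard_ideal_div E)
    filter_upwards [eventually_ne_atTop 0] with n hn h
    exact absurd (Nat.cast_eq_zero.mp h) hn
  have := LSeriesSummable_of_sum_norm_bigO_and_nonneg (s := s) hO (fun n ↦ Nat.cast_nonneg _)
    zero_le_one (by simpa using hs)
  refine (LSeriesSummable_congr s fun {n} hn ↦ ?_).mpr this
  rw [natCard_ne_zero_ideal_absNorm_eq hn, Complex.ofReal_natCast]

theorem tendsto_sub_one_mul_tsum_absNorm_rpow :
    Tendsto (fun s : ℝ ↦ (s - 1) * ∑' I : {I : Ideal (𝓞 E) // I ≠ 0},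
      (Ideal.absNorm I.1 : ℝ) ^ (-s)) (𝓝[>] 1) (𝓝 (NumberField.dedekindZeta_residue E)) := by
  rw [← Filter.tendsto_ofReal_iff]
  refine (NumberField.tendsto_sub_one_mul_dedekindZeta_nhdsGT E).congr' ?_
  filter_upwards [self_mem_nhdsWithin] with s hs
  push_cast
  rw [← Complex.ofReal_tsum, ← LSeries_natCard_fiber absNorm_ne_zero_of_ne_zero
    (summable_absNorm_rpow hs), NumberField.dedekindZeta]
  congr 1
  exact LSeries_congr (fun {n} hn ↦ by rw [natCard_ne_zero_ideal_absNorm_eq hn]) _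

theorem bijective_finsupp_prod_pow :
    Function.Bijective fun n : HeightOneSpectrum (𝓞 E) →₀ ℕ ↦
      (⟨n.prod fun P k ↦ P.asIdeal ^ k, Finset.prod_ne_zero_iff.mpr fun P _ ↦
        pow_ne_zero _ P.ne_bot⟩ : {I : Ideal (𝓞 E) // I ≠ 0}) := by
  classical
  have hprod (n : HeightOneSpectrum (𝓞 E) →₀ ℕ) : n.prod (fun P k ↦ P.asIdeal ^ k) =
      ((Finsupp.toMultiset n).map HeightOneSpectrum.asIdeal).prod := by
    rw [Finsupp.toMultiset_map, Finsupp.prod_toMultiset, Finsupp.prod_mapDomain_index] <;>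
      simp [pow_add]
  constructor
  · intro m n h
    have h' := Subtype.ext_iff.mp h
    simp only [hprod] at h'
    replace h' := congrArg UniqueFactorizationMonoid.normalizedFactors h'
    rw [UniqueFactorizationMonoid.normalizedFactors_prod_of_prime,
      UniqueFactorizationMonoid.normalizedFactors_prod_of_prime] at h'
    · exact Multiset.toFinsupp.symm.injective (Multiset.map_injective
        (fun P Q h ↦ HeightOneSpectrum.ext h) h')
    all_goals
      simp only [Multiset.mem_map]
      rintro _ ⟨P, -, rfl⟩
      exact P.prime
  · rintro ⟨I, hI⟩
    suffices ∃ n : HeightOneSpectrum (𝓞 E) →₀ ℕ, (n.prod fun P k ↦ P.asIdeal ^ k) = I from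
      this.imp fun n hn ↦ Subtype.ext hn
    induction I using UniqueFactorizationMonoid.induction_on_prime with
    | h₁ => exact absurd rfl hI
    | h₂ I h => exact ⟨0, by rw [Finsupp.prod_zero_index, isUnit_iff_eq_one.mp h]⟩
    | h₃ I P hI' hP ih =>
      obtain ⟨n, rfl⟩ := ih hI'
      refine ⟨Finsupp.single ⟨P, Ideal.isPrime_of_prime hP, hP.ne_zero⟩ 1 + n, ?_⟩
      rw [Finsupp.prod_add_index'] <;> simp [pow_add]

variable (E) in
theorem hasProd_absNorm_rpow {s : ℝ} (hs : 1 < s) :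
    HasProd (fun P : HeightOneSpectrum (𝓞 E) ↦ (1 - (Ideal.absNorm P.asIdeal : ℝ) ^ (-s))⁻¹)
      (∑' I : {I : Ideal (𝓞 E) // I ≠ 0}, (Ideal.absNorm I.1 : ℝ) ^ (-s)) := by
  let e := Equiv.ofBijective _ (bijective_finsupp_prod_pow (E := E))
  have he (n : HeightOneSpectrum (𝓞 E) →₀ ℕ) : (Ideal.absNorm (e n).1 : ℝ) ^ (-s) =
      n.prod fun P k ↦ ((Ideal.absNorm P.asIdeal : ℝ) ^ (-s)) ^ k := by
    simp only [e, Equiv.ofBijective_apply, Finsupp.prod, map_prod, map_pow, Nat.cast_prod,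
      Nat.cast_pow]
    rw [← Real.finsetProd_rpow _ _ fun i _ ↦ by positivity]
    refine Finset.prod_congr rfl fun P _ ↦ ?_
    rw [← Real.rpow_natCast_mul, mul_comm, Real.rpow_mul_natCast] <;> positivity
  rw [← e.tsum_eq, tsum_congr he]
  refine hasProd_inv_one_sub (fun P ↦ by positivity) (fun P ↦ ?_) ?_
  · refine Real.rpow_lt_one_of_one_lt_of_neg ?_ (by linarith)
    exact_mod_cast NumberField.HeightOneSpectrum.one_lt_absNorm P
  · simpa only [← he, Function.comp_def] using e.summable_iff.mpr (summable_absNorm_rpow hs)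

end IdealSums

section LogSeries

theorem le_neg_log_one_sub {x : ℝ} (h : x < 1) : x ≤ -Real.log (1 - x) := by
  have := Real.log_le_sub_one_of_pos (sub_pos.mpr h)
  linarith

theorem neg_log_one_sub_le {x : ℝ} (h : x ≤ 1 / 2) : -Real.log (1 - x) ≤ x + 2 * x ^ 2 := by
  have hpos : 0 < 1 - x := by linarith
  have hlog := Real.one_sub_inv_le_log_of_pos hpos
  have hinv : (1 - x)⁻¹ ≤ 1 + x + 2 * x ^ 2 := by
    rw [inv_le_iff_one_le_mul₀ hpos]
    nlinarith [mul_nonneg (sq_nonneg x) (by linarith : 0 ≤ 1 - 2 * x)]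
  linarith

variable {ι : Type*} {w : ι → ℕ} {T : Set ι}

theorem abs_neg_log_sub_indicator_le {i : ι} (hw : 2 ≤ w i) {s : ℝ} (hs : 1 < s) :
    |-Real.log (1 - (w i : ℝ) ^ (-s)) - T.indicator (fun i ↦ (w i : ℝ) ^ (-s)) i| ≤
      2 * (w i : ℝ) ^ (-2 : ℝ) + Tᶜ.indicator (fun i ↦ (w i : ℝ)⁻¹) i := by
  set x := (w i : ℝ) ^ (-s) with hx
  have hw' : (2 : ℝ) ≤ w i := by exact_mod_cast hw
  have hx0 : 0 ≤ x := by positivity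
  have hxw : x ≤ (w i : ℝ)⁻¹ := by
    rw [← Real.rpow_neg_one]
    exact Real.rpow_le_rpow_of_exponent_le (by linarith) (by linarith)
  have hx2 : x ≤ 1 / 2 := hxw.trans (by rw [one_div]; gcongr)
  have hsq : x ^ 2 ≤ (w i : ℝ) ^ (-2 : ℝ) := by
    rw [Real.rpow_neg (Nat.cast_nonneg _), Real.rpow_two, ← inv_pow]
    gcongr
  have hle := le_neg_log_one_sub (hx2.trans_lt (by norm_num))
  have hge := neg_log_one_sub_le hx2
  rw [abs_le]
  by_cases hi : i ∈ T
  · rw [Set.indicator_of_mem hi, Set.indicator_of_notMem (by simpa using hi), ← hx]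
    constructor <;> linarith
  · rw [Set.indicator_of_notMem hi, Set.indicator_of_mem (by exact hi)]
    constructor <;> linarith

theorem exists_abs_tsum_neg_log_sub_tsum_le (hw : ∀ i, 2 ≤ w i)
    (hsum : ∀ s : ℝ, 1 < s → Summable fun i ↦ (w i : ℝ) ^ (-s))
    (hT : Summable fun i : ↥Tᶜ ↦ (w i : ℝ)⁻¹) :
    ∃ C : ℝ, ∀ s : ℝ, 1 < s →
      |∑' i, -Real.log (1 - (w i : ℝ) ^ (-s)) - ∑' i : T, (w i : ℝ) ^ (-s)| ≤ C := by
  have hbound : Summable fun i ↦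
      2 * (w i : ℝ) ^ (-2 : ℝ) + Tᶜ.indicator (fun i ↦ (w i : ℝ)⁻¹) i :=
    ((hsum 2 one_lt_two).mul_left 2).add (summable_subtype_iff_indicator.mp hT)
  refine ⟨∑' i, (2 * (w i : ℝ) ^ (-2 : ℝ) + Tᶜ.indicator (fun i ↦ (w i : ℝ)⁻¹) i), fun s hs ↦ ?_⟩
  have hind := (hsum s hs).indicator T
  have hdiff : Summable fun i ↦
      -Real.log (1 - (w i : ℝ) ^ (-s)) - T.indicator (fun i ↦ (w i : ℝ) ^ (-s)) i :=
    .of_norm_bounded hbound fun i ↦ abs_neg_log_sub_indicator_le (hw i) hs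
  have hlog : Summable fun i ↦ -Real.log (1 - (w i : ℝ) ^ (-s)) :=
    (hdiff.add hind).congr fun i ↦ sub_add_cancel _ _
  rw [tsum_subtype T fun i ↦ (w i : ℝ) ^ (-s), ← hlog.tsum_sub hind, ← Real.norm_eq_abs]
  exact tsum_of_norm_bounded hbound.hasSum fun i ↦ abs_neg_log_sub_indicator_le (hw i) hs

end LogSeries

section LogZeta

open Filter Topology IsDedekindDomain

variable {E : Type*} [Field E] [NumberField E]

theorem two_le_absNorm (P : HeightOneSpectrum (𝓞 E)) : 2 ≤ Ideal.absNorm P.asIdeal :=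
  NumberField.HeightOneSpectrum.one_lt_absNorm P

theorem exists_absNorm_eq_minFac_pow (P : HeightOneSpectrum (𝓞 E)) :
    ∃ f ≠ 0, Ideal.absNorm P.asIdeal = (Ideal.absNorm P.asIdeal).minFac ^ f := by
  obtain ⟨p, f, hf, -, hp, hP⟩ := Ideal.exists_prime_and_absNorm_eq_pow P.asIdeal
  exact ⟨f, hf.ne', by rw [hP, hp.pow_minFac hf.ne']⟩

theorem prime_minFac_absNorm (P : HeightOneSpectrum (𝓞 E)) :
    (Ideal.absNorm P.asIdeal).minFac.Prime :=
  Nat.minFac_prime (NumberField.HeightOneSpectrum.one_lt_absNorm P).ne'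

theorem exists_injective_minFac_absNorm_eq (p : ℕ) [Fact p.Prime] :
    ∃ φ : {P : HeightOneSpectrum (𝓞 E) // (Ideal.absNorm P.asIdeal).minFac = p} →
      (𝓞 E →+* AlgebraicClosure (ZMod p)), Function.Injective φ := by
  have hker (P : {P : HeightOneSpectrum (𝓞 E) // (Ideal.absNorm P.asIdeal).minFac = p}) :
      ∃ φ : 𝓞 E →+* AlgebraicClosure (ZMod p), RingHom.ker φ = P.1.asIdeal := by
    obtain ⟨f, hf, hP⟩ := exists_absNorm_eq_minFac_pow P.1
    rw [P.2] at hP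
    rw [← nonempty_subtype]
    exact (Nat.card_ne_zero.mp (by rwa [card_ringHom_ker_eq_asIdeal hP])).1
  choose φ hφ using hker
  refine ⟨φ, fun P Q h ↦ Subtype.ext (HeightOneSpectrum.ext ?_)⟩
  rw [← hφ P, h, hφ Q]

instance finite_minFac_absNorm_eq (p : ℕ) :
    Finite {P : HeightOneSpectrum (𝓞 E) // (Ideal.absNorm P.asIdeal).minFac = p} := by
  by_cases hp : p.Prime
  · have : Fact p.Prime := ⟨hp⟩
    obtain ⟨φ, hφ⟩ := exists_injective_minFac_absNorm_eq (E := E) p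
    exact .of_injective φ hφ
  · have : IsEmpty {P : HeightOneSpectrum (𝓞 E) // (Ideal.absNorm P.asIdeal).minFac = p} :=
      ⟨fun P ↦ hp (P.2 ▸ prime_minFac_absNorm P.1)⟩
    infer_instance

variable (E) in
theorem card_minFac_absNorm_eq_le (p : ℕ) :
    Nat.card {P : HeightOneSpectrum (𝓞 E) // (Ideal.absNorm P.asIdeal).minFac = p} ≤
      Module.finrank ℚ E := by
  by_cases hp : p.Prime
  · have : Fact p.Prime := ⟨hp⟩
    obtain ⟨φ, hφ⟩ := exists_injective_minFac_absNorm_eq (E := E) p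
    exact (Nat.card_le_card_of_injective φ hφ).trans (card_ringHom_le_finrank _)
  · have : IsEmpty {P : HeightOneSpectrum (𝓞 E) // (Ideal.absNorm P.asIdeal).minFac = p} :=
      ⟨fun P ↦ hp (P.2 ▸ prime_minFac_absNorm P.1)⟩
    simp

variable (E) in
theorem summable_inv_sq_minFac_absNorm :
    Summable fun P : HeightOneSpectrum (𝓞 E) ↦ (((Ideal.absNorm P.asIdeal).minFac : ℝ) ^ 2)⁻¹ := by
  rw [summable_comp_iff_summable_card_fiber_mul (v := fun n : ℕ ↦ ((n : ℝ) ^ 2)⁻¹)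
    fun n ↦ by positivity]
  refine Summable.of_nonneg_of_le (fun n ↦ by positivity) (fun n ↦ ?_)
    ((Real.summable_nat_pow_inv.mpr one_lt_two).mul_left (Module.finrank ℚ E : ℝ))
  gcongr
  exact card_minFac_absNorm_eq_le E n

/-- The rational primes that do not divide `D`. -/
def primesNotDvd (D : ℕ) : Set ℕ :=
  {p | p.Prime ∧ ¬ p ∣ D}

variable (E) in
/-- The primes of degree one of `E` that do not divide `D`. -/
def degreeOnePrimes (D : ℕ) : Set (HeightOneSpectrum (𝓞 E)) :=
  (fun P ↦ Ideal.absNorm P.asIdeal) ⁻¹' primesNotDvd D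

theorem minFac_absNorm_sq_le_of_notMem_degreeOnePrimes {D : ℕ} (hD : D ≠ 0)
    {P : HeightOneSpectrum (𝓞 E)} (hP : P ∉ degreeOnePrimes E D) :
    (Ideal.absNorm P.asIdeal).minFac ^ 2 ≤ D * Ideal.absNorm P.asIdeal := by
  by_cases hprime : (Ideal.absNorm P.asIdeal).Prime
  · have hdvd : Ideal.absNorm P.asIdeal ∣ D := by
      simpa [degreeOnePrimes, primesNotDvd, hprime] using hP
    rw [hprime.minFac_eq, sq]
    exact Nat.mul_le_mul_right _ (Nat.le_of_dvd (Nat.pos_of_ne_zero hD) hdvd)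
  · exact (Nat.minFac_sq_le_self (by linarith [two_le_absNorm P]) hprime).trans
      (Nat.le_mul_of_pos_left _ (Nat.pos_of_ne_zero hD))

variable (E) in
theorem summable_inv_absNorm_compl_degreeOnePrimes {D : ℕ} (hD : D ≠ 0) :
    Summable fun P : ↥(degreeOnePrimes E D)ᶜ ↦ (Ideal.absNorm P.1.asIdeal : ℝ)⁻¹ := by
  refine Summable.of_nonneg_of_le (fun P ↦ by positivity) (fun P ↦ ?_)
    (((summable_inv_sq_minFac_absNorm E).subtype _).mul_left (D : ℝ))
  have hP := minFac_absNorm_sq_le_of_notMem_degreeOnePrimes hD P.2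
  have hminFac := (prime_minFac_absNorm P.1).pos
  have hnorm := two_le_absNorm P.1
  simp only [Function.comp_apply]
  rw [← div_eq_mul_inv, le_div_iff₀ (by positivity), inv_mul_le_iff₀ (by positivity), mul_comm]
  exact_mod_cast hP

theorem summable_absNorm_asIdeal_rpow {s : ℝ} (hs : 1 < s) :
    Summable fun P : HeightOneSpectrum (𝓞 E) ↦ (Ideal.absNorm P.asIdeal : ℝ) ^ (-s) :=
  (summable_absNorm_rpow hs).comp_injective
    (i := fun P : HeightOneSpectrum (𝓞 E) ↦ (⟨P.asIdeal, P.ne_bot⟩ : {I : Ideal (𝓞 E) // I ≠ 0}))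
    fun _ _ h ↦ HeightOneSpectrum.ext (Subtype.ext_iff.mp h)

theorem tsum_absNorm_rpow_pos {s : ℝ} (hs : 1 < s) :
    0 < ∑' I : {I : Ideal (𝓞 E) // I ≠ 0}, (Ideal.absNorm I.1 : ℝ) ^ (-s) :=
  (summable_absNorm_rpow hs).tsum_pos (fun I ↦ by positivity) ⟨⊤, top_ne_bot⟩ (by simp)

variable (E) in
theorem hasSum_neg_log_one_sub_absNorm_rpow {s : ℝ} (hs : 1 < s) :
    HasSum (fun P : HeightOneSpectrum (𝓞 E) ↦ -Real.log (1 - (Ideal.absNorm P.asIdeal : ℝ) ^ (-s)))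
      (Real.log (∑' I : {I : Ideal (𝓞 E) // I ≠ 0}, (Ideal.absNorm I.1 : ℝ) ^ (-s))) := by
  have h := hasProd_absNorm_rpow E hs
  rw [HasProd] at h
  refine (h.log (tsum_absNorm_rpow_pos hs).ne').congr fun T ↦ ?_
  rw [Real.log_prod]
  · simp
  · intro P _
    refine inv_ne_zero (sub_pos.mpr (Real.rpow_lt_one_of_one_lt_of_neg ?_ (by linarith))).ne'
    exact_mod_cast NumberField.HeightOneSpectrum.one_lt_absNorm P

variable (E) in
theorem exists_abs_log_tsum_sub_tsum_degreeOnePrimes_le {D : ℕ} (hD : D ≠ 0) :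
    ∃ C : ℝ, ∀ s : ℝ, 1 < s →
      |Real.log (∑' I : {I : Ideal (𝓞 E) // I ≠ 0}, (Ideal.absNorm I.1 : ℝ) ^ (-s)) -
        ∑' P : degreeOnePrimes E D, (Ideal.absNorm P.1.asIdeal : ℝ) ^ (-s)| ≤ C := by
  obtain ⟨C, hC⟩ := exists_abs_tsum_neg_log_sub_tsum_le two_le_absNorm
    (fun s ↦ summable_absNorm_asIdeal_rpow) (summable_inv_absNorm_compl_degreeOnePrimes E hD)
  refine ⟨C, fun s hs ↦ ?_⟩
  rw [← (hasSum_neg_log_one_sub_absNorm_rpow E hs).tsum_eq]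
  exact hC s hs

end LogZeta

section DirichletAverage

open Filter Topology IsDedekindDomain

theorem tendsto_neg_log_sub_one : Tendsto (fun s : ℝ ↦ -Real.log (s - 1)) (𝓝[>] 1) atTop := by
  refine tendsto_neg_atBot_atTop.comp (Real.tendsto_log_nhdsGT_zero.comp ?_)
  refine tendsto_nhdsWithin_iff.mpr ⟨?_, ?_⟩
  · have : Tendsto (fun s : ℝ ↦ s - 1) (𝓝 1) (𝓝 (1 - 1)) := (continuous_sub_right 1).tendsto 1
    rw [sub_self] at this
    exact this.mono_left nhdsWithin_le_nhds
  · filter_upwards [self_mem_nhdsWithin] with s hs using sub_pos.mpr (Set.mem_Ioi.mp hs)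

section PrimeCount

variable (E : Type*) [Field E] [NumberField E]

theorem tendsto_log_tsum_div_neg_log_sub_one :
    Tendsto (fun s : ℝ ↦ Real.log (∑' I : {I : Ideal (𝓞 E) // I ≠ 0},
      (Ideal.absNorm I.1 : ℝ) ^ (-s)) / -Real.log (s - 1)) (𝓝[>] 1) (𝓝 1) := by
  have hlog := (((tendsto_sub_one_mul_tsum_absNorm_rpow (E := E)).log
    (NumberField.dedekindZeta_residue_pos E).ne').div_atTop tendsto_neg_log_sub_one).const_add 1
  rw [add_zero] at hlog
  refine hlog.congr' ?_
  filter_upwards [self_mem_nhdsWithin, tendsto_neg_log_sub_one.eventually_gt_atTop 0] with s hs hpos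
  rw [Real.log_mul (sub_pos.mpr hs).ne' (tsum_absNorm_rpow_pos hs).ne']
  have := neg_ne_zero.mp hpos.ne'
  field_simp
  ring

theorem tsum_primeCount_mul_rpow {s : ℝ} (hs : 1 < s) (D : ℕ) :
    ∑' p : primesNotDvd D, (primeCount E p : ℝ) * (p : ℝ) ^ (-s) =
      ∑' P : degreeOnePrimes E D, (Ideal.absNorm P.1.asIdeal : ℝ) ^ (-s) := by
  have hsum : Summable fun P : degreeOnePrimes E D ↦ (Ideal.absNorm P.1.asIdeal : ℝ) ^ (-s) :=
    (summable_absNorm_asIdeal_rpow hs).subtype _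
  exact (hasSum_subtype_card_fiber_mul (v := fun n : ℕ ↦ (n : ℝ) ^ (-s)) hsum.hasSum).tsum_eq

theorem tendsto_tsum_primeCount_div_neg_log_sub_one {D : ℕ} (hD : D ≠ 0) :
    Tendsto (fun s : ℝ ↦ (∑' p : primesNotDvd D, (primeCount E p : ℝ) * (p : ℝ) ^ (-s)) /
      -Real.log (s - 1)) (𝓝[>] 1) (𝓝 1) := by
  obtain ⟨C, hC⟩ := exists_abs_log_tsum_sub_tsum_degreeOnePrimes_le E hD
  have herror := tendsto_bdd_div_atTop_nhds_zero
    (eventually_mem_nhdsWithin.mono fun s hs ↦ (abs_le.mp (hC s hs)).1)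
    (eventually_mem_nhdsWithin.mono fun s hs ↦ (abs_le.mp (hC s hs)).2) tendsto_neg_log_sub_one
  have hlim := (tendsto_log_tsum_div_neg_log_sub_one E).sub herror
  rw [sub_zero] at hlim
  refine hlim.congr' ?_
  filter_upwards [self_mem_nhdsWithin] with s hs
  rw [← sub_div, sub_sub_cancel, tsum_primeCount_mul_rpow E hs D]

end PrimeCount

theorem summable_apply_mul_rpow {G : Type*} [Finite G] {S : Set ℕ} (τ : S → G) (f : G → ℝ)
    {s : ℝ} (hs : 1 < s) : Summable fun n : S ↦ f (τ n) * (n : ℝ) ^ (-s) := by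
  have := Fintype.ofFinite G
  refine Summable.of_norm_bounded (((Real.summable_nat_rpow.mpr
    (by linarith : -s < -1)).subtype S).mul_left (∑ g, |f g|)) fun n ↦ ?_
  rw [norm_mul, Real.norm_eq_abs, Real.norm_of_nonneg (by positivity : 0 ≤ (n : ℝ) ^ (-s))]
  exact mul_le_mul_of_nonneg_right (Finset.single_le_sum (f := fun g ↦ |f g|)
    (fun g _ ↦ abs_nonneg _) (Finset.mem_univ (τ n))) (by positivity)

/-- For `τ : S → G`, the mean of `f ∘ τ` with respect to Dirichlet density is the average of the
function `f` over `G`. -/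
def HasDirichletAverage {G : Type*} [Fintype G] {S : Set ℕ} (τ : S → G) (f : G → ℝ) : Prop :=
  Tendsto (fun s : ℝ ↦ (∑' n : S, f (τ n) * (n : ℝ) ^ (-s)) / -Real.log (s - 1)) (𝓝[>] 1)
    (𝓝 ((∑ g, f g) / Fintype.card G))

namespace HasDirichletAverage

variable {G : Type*} [Fintype G] {S : Set ℕ} {τ : S → G}

theorem sum {ι : Type*} {T : Finset ι} {f : ι → G → ℝ}
    (h : ∀ i ∈ T, HasDirichletAverage τ (f i)) :
    HasDirichletAverage τ fun g ↦ ∑ i ∈ T, f i g := by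
  have hlim := tendsto_finsetSum T h
  rw [← Finset.sum_div, Finset.sum_comm] at hlim
  refine hlim.congr' ?_
  filter_upwards [self_mem_nhdsWithin] with s hs
  simp_rw [← Finset.sum_div, Finset.sum_mul]
  rw [Summable.tsum_finsetSum fun i _ ↦ summable_apply_mul_rpow τ (f i) hs]

theorem const_mul (a : ℝ) {f : G → ℝ} (h : HasDirichletAverage τ f) :
    HasDirichletAverage τ fun g ↦ a * f g := by
  rw [HasDirichletAverage, ← Finset.mul_sum, mul_div_assoc]
  refine (Tendsto.const_mul a h).congr fun s ↦ ?_
  simp_rw [← mul_div_assoc, ← tsum_mul_left, mul_assoc]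

theorem add {f g : G → ℝ} (hf : HasDirichletAverage τ f) (hg : HasDirichletAverage τ g) :
    HasDirichletAverage τ fun x ↦ f x + g x := by
  have := sum (τ := τ) (T := Finset.univ) (f := ![f, g]) (by simp [hf, hg])
  simpa using this

theorem eq_zero_of_sq [Nonempty G] {f : G → ℝ} (h : HasDirichletAverage τ fun g ↦ f g ^ 2)
    (hτ : ∀ n, f (τ n) = 0) (g : G) : f g = 0 := by
  have hsum : (∑ g, f g ^ 2) / Fintype.card G = 0 := by
    refine tendsto_nhds_unique h ?_
    simp [hτ]
  rw [div_eq_zero_iff, or_iff_left (by simp), Finset.sum_eq_zero_iff_of_nonneg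
    fun _ _ ↦ sq_nonneg _] at hsum
  exact pow_eq_zero_iff two_ne_zero |>.mp (hsum g (Finset.mem_univ g))

end HasDirichletAverage

end DirichletAverage

section PermutationCharacter

variable {G : Type*} [Group G]

theorem card_fixedBy_prod (X Y : Type*) [MulAction G X] [MulAction G Y] (g : G) :
    Nat.card (MulAction.fixedBy (X × Y) g) =
      Nat.card (MulAction.fixedBy X g) * Nat.card (MulAction.fixedBy Y g) := by
  rw [← Nat.card_prod, ← Nat.card_congr (Equiv.Set.prod _ _)]
  congr! 2
  ext x
  exact Prod.ext_iff

theorem card_fixedBy_eq_sum {X ι : Type*} {Y : ι → Type*} [MulAction G X] [Fintype ι]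
    [∀ i, MulAction G (Y i)] [∀ i, Finite (Y i)] (e : (Σ i, Y i) ≃ X)
    (he : ∀ i y (g : G), e ⟨i, g • y⟩ = g • e ⟨i, y⟩) (g : G) :
    Nat.card (MulAction.fixedBy X g) = ∑ i, Nat.card (MulAction.fixedBy (Y i) g) := by
  have hfixed (x : Σ i, Y i) : x.2 ∈ MulAction.fixedBy (Y x.1) g ↔ e x ∈ MulAction.fixedBy X g := by
    rw [MulAction.mem_fixedBy, MulAction.mem_fixedBy, ← he, e.injective.eq_iff, Sigma.ext_iff,
      heq_eq_eq, and_iff_right rfl]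
  let sigmaFixedBy : {x : Σ i, Y i // x.2 ∈ MulAction.fixedBy (Y x.1) g} ≃
      Σ i, MulAction.fixedBy (Y i) g :=
    ⟨fun x ↦ ⟨x.1.1, x.1.2, x.2⟩, fun x ↦ ⟨⟨x.1, x.2.1⟩, x.2.2⟩, fun _ ↦ rfl, fun _ ↦ rfl⟩
  rw [← Nat.card_sigma]
  exact Nat.card_congr ((e.subtypeEquiv hfixed).symm.trans sigmaFixedBy)

theorem card_fixedBy_eq_sum_orbits (X : Type*) [MulAction G X] [Finite X]
    [Fintype (MulAction.orbitRel.Quotient G X)] (g : G) :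
    Nat.card (MulAction.fixedBy X g) = ∑ ω : MulAction.orbitRel.Quotient G X,
      Nat.card (MulAction.fixedBy (G ⧸ MulAction.stabilizer G ω.out) g) := by
  have (ω : MulAction.orbitRel.Quotient G X) : Finite (G ⧸ MulAction.stabilizer G ω.out) :=
    .of_injective _ (MulAction.injective_ofQuotientStabilizer G ω.out)
  have hsymm (ω : MulAction.orbitRel.Quotient G X) (y : G ⧸ MulAction.stabilizer G ω.out) :
      (MulAction.selfEquivSigmaOrbitsQuotientStabilizer G X).symm ⟨ω, y⟩ =
        MulAction.ofQuotientStabilizer G ω.out y := rfl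
  refine card_fixedBy_eq_sum (MulAction.selfEquivSigmaOrbitsQuotientStabilizer G X).symm
    (fun ω y h ↦ ?_) g
  rw [hsymm, hsymm, MulAction.ofQuotientStabilizer_smul]

theorem sum_card_fixedBy_quotient [Fintype G] (U : Subgroup G) :
    ∑ g : G, Nat.card (MulAction.fixedBy (G ⧸ U) g) = Fintype.card G := by
  classical
  have hcard : Fintype.card (MulAction.orbitRel.Quotient G (G ⧸ U)) = 1 :=
    Fintype.card_eq_one_iff_nonempty_unique.mpr
      ((MulAction.pretransitive_iff_unique_quotient_of_nonempty G (G ⧸ U)).mp inferInstance)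
  simp_rw [Nat.card_eq_fintype_card]
  rw [MulAction.sum_card_fixedBy_eq_card_orbits_mul_card_group, hcard, one_mul]

variable [Fintype G] {S : Set ℕ} {τ : S → G}

theorem hasDirichletAverage_card_fixedBy
    (h : ∀ U : Subgroup G,
      HasDirichletAverage τ fun g ↦ (Nat.card (MulAction.fixedBy (G ⧸ U) g) : ℝ))
    (X : Type*) [MulAction G X] [Finite X] :
    HasDirichletAverage τ fun g ↦ (Nat.card (MulAction.fixedBy X g) : ℝ) := by
  have := Fintype.ofFinite (MulAction.orbitRel.Quotient G X)
  simp_rw [card_fixedBy_eq_sum_orbits X, Nat.cast_sum]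
  exact .sum fun ω _ ↦ h _

theorem card_fixedBy_eq_of_hasDirichletAverage
    (h : ∀ U : Subgroup G,
      HasDirichletAverage τ fun g ↦ (Nat.card (MulAction.fixedBy (G ⧸ U) g) : ℝ))
    {X Y : Type*} [MulAction G X] [MulAction G Y] [Finite X] [Finite Y]
    (hτ : ∀ n, Nat.card (MulAction.fixedBy X (τ n)) = Nat.card (MulAction.fixedBy Y (τ n)))
    (g : G) : Nat.card (MulAction.fixedBy X g) = Nat.card (MulAction.fixedBy Y g) := by
  have hsq : HasDirichletAverage τ fun g ↦
      ((Nat.card (MulAction.fixedBy X g) : ℝ) - Nat.card (MulAction.fixedBy Y g)) ^ 2 := by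
    convert ((hasDirichletAverage_card_fixedBy h (X × X)).add
      ((hasDirichletAverage_card_fixedBy h (X × Y)).const_mul (-2))).add
      (hasDirichletAverage_card_fixedBy h (Y × Y)) using 2 with g
    simp only [card_fixedBy_prod, Nat.cast_mul]
    ring
  exact_mod_cast sub_eq_zero.mp (hsq.eq_zero_of_sq (fun n ↦ by rw [hτ, sub_self]) g)

end PermutationCharacter

section Frobenius

variable {B G : Type*} [CommRing B] [Group G] [Finite G] [MulSemiringAction G B]

variable (B) in
/-- `σ` is a Frobenius element at a prime of `B` over `p` with trivial inertia. The prime is the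
kernel of `z`, and the congruence `b ^ p ≡ σ • b` modulo it is stated as an equality in an algebraic
closure of `𝔽_p`, for all powers of `σ` at once. -/
def IsUnramifiedFrobenius (p : ℕ) [Fact p.Prime] (σ : G) : Prop :=
  ∃ z : B →+* AlgebraicClosure (ZMod p), (RingHom.ker z).inertia G = ⊥ ∧
    ∀ k b, iterateFrobenius (AlgebraicClosure (ZMod p)) p k (z b) = z (σ ^ k • b)

theorem exists_isUnramifiedFrobenius [Algebra.IsInvariant ℤ B G] [FaithfulSMul ℤ B] {n : ℕ}
    (hn : ∀ P : Ideal B, (n : B) ∉ P → P.inertia G = ⊥) {p : ℕ} [Fact p.Prime] (hp : ¬ p ∣ n) :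
    ∃ σ : G, IsUnramifiedFrobenius B p σ := by
  have := Algebra.IsInvariant.isIntegral ℤ B G
  obtain ⟨z, -⟩ := surjective_comp_algebraMap_of_isIntegral (B := B)
    (Int.castRingHom (AlgebraicClosure (ZMod p)))
  obtain ⟨σ, hσ⟩ := exists_iterateFrobenius_apply_eq_apply_pow_smul (G := G) p z
  refine ⟨σ, z, hn _ ?_, hσ⟩
  rwa [RingHom.mem_ker, map_natCast, CharP.cast_eq_zero_iff _ p]

end Frobenius

section Comparison

instance fact_prime_primesNotDvd (D : ℕ) (p : primesNotDvd D) : Fact (p : ℕ).Prime :=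
  ⟨p.2.1⟩

section Galois

variable {N : Type*} [Field N] [NumberField N] [IsGalois ℚ N]

theorem primeCount_eq_card_fixedBy {E : Type*} [Field E] [NumberField E] [Algebra E N]
    {U : Subgroup (N ≃ₐ[ℚ] N)} [IsGaloisGroup U E N] {p : ℕ} [Fact p.Prime] {σ : N ≃ₐ[ℚ] N}
    (hσ : IsUnramifiedFrobenius (𝓞 N) p σ) :
    primeCount E p = Nat.card (MulAction.fixedBy ((N ≃ₐ[ℚ] N) ⧸ U) σ) := by
  obtain ⟨z, hz, hzσ⟩ := hσ
  have : IsGaloisGroup U (𝓞 E) (𝓞 N) := IsGaloisGroup.of_isFractionRing U (𝓞 E) (𝓞 N) E N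
  rw [← finiteFieldPointCount_one, finiteFieldPointCount_eq_card_fixedBy (U := U) hz hzσ]

theorem hasDirichletAverage_card_fixedBy_quotient {D : ℕ} (hD : D ≠ 0)
    {τ : primesNotDvd D → (N ≃ₐ[ℚ] N)}
    (hτ : ∀ p : primesNotDvd D, IsUnramifiedFrobenius (𝓞 N) p (τ p))
    (U : Subgroup (N ≃ₐ[ℚ] N)) :
    HasDirichletAverage τ fun g ↦
      (Nat.card (MulAction.fixedBy ((N ≃ₐ[ℚ] N) ⧸ U) g) : ℝ) := by
  let E : IntermediateField ℚ N := FixedPoints.intermediateField U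
  have hlim := tendsto_tsum_primeCount_div_neg_log_sub_one E hD
  rw [HasDirichletAverage, ← Nat.cast_sum, sum_card_fixedBy_quotient, div_self (by simp)]
  simpa only [primeCount_eq_card_fixedBy (U := U) (hτ _)] using hlim

end Galois

theorem exists_isGalois_algHom (K L : Type*) [Field K] [NumberField K] [Field L] [NumberField L] :
    ∃ (N : Type) (_ : Field N) (_ : NumberField N),
      IsGalois ℚ N ∧ Nonempty (K →ₐ[ℚ] N) ∧ Nonempty (L →ₐ[ℚ] N) := by
  let f : K →ₐ[ℚ] AlgebraicClosure ℚ := IsAlgClosed.lift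
  let g : L →ₐ[ℚ] AlgebraicClosure ℚ := IsAlgClosed.lift
  have : FiniteDimensional ℚ f.fieldRange := f.toLinearMap.finiteDimensional_range
  have : FiniteDimensional ℚ g.fieldRange := g.toLinearMap.finiteDimensional_range
  let M := f.fieldRange ⊔ g.fieldRange
  let N := IntermediateField.normalClosure ℚ M (AlgebraicClosure ℚ)
  have hMN : M ≤ N := IntermediateField.le_normalClosure M
  have : NumberField N := { }
  have : Algebra.IsAlgebraic ℚ (AlgebraicClosure ℚ) := by
    rw [Subsingleton.elim (DivisionRing.toRatAlgebra (R := AlgebraicClosure ℚ))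
      (AlgebraicClosure.instAlgebra ℚ)]
    exact AlgebraicClosure.isAlgebraic ℚ
  have : IsAlgClosure ℚ (AlgebraicClosure ℚ) := ⟨inferInstance, this⟩
  have : Normal ℚ N := normalClosure.normal ℚ M (AlgebraicClosure ℚ)
  refine ⟨N, inferInstance, inferInstance, ⟨⟩, ⟨?_⟩, ⟨?_⟩⟩
  · exact (IntermediateField.inclusion (le_sup_left.trans hMN)).comp f.rangeRestrict
  · exact (IntermediateField.inclusion (le_sup_right.trans hMN)).comp g.rangeRestrict

theorem primeCount_eq_of_forall_not_dvd {K L : Type*} [Field K] [NumberField K] [Field L]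
    [NumberField L] {D : ℕ} (hD : D ≠ 0)
    (h : ∀ p : ℕ, p.Prime → ¬ p ∣ D → primeCount K p = primeCount L p) (q : ℕ) :
    primeCount K q = primeCount L q := by
  obtain ⟨N, _, _, _, ⟨f⟩, ⟨g⟩⟩ := exists_isGalois_algHom K L
  let := f.toRingHom.toAlgebra
  let := g.toRingHom.toAlgebra
  let U := fixingSubgroup (N ≃ₐ[ℚ] N) (Set.range (algebraMap K N))
  let V := fixingSubgroup (N ≃ₐ[ℚ] N) (Set.range (algebraMap L N))
  have : IsGaloisGroup U K N := IsGaloisGroup.of_isScalarTower _ ℚ N K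
  have : IsGaloisGroup V L N := IsGaloisGroup.of_isScalarTower _ ℚ N L
  have : FaithfulSMul (N ≃ₐ[ℚ] N) (𝓞 N) :=
    (inferInstance : IsGaloisGroup (N ≃ₐ[ℚ] N) ℤ (𝓞 N)).faithful
  obtain ⟨n, hn, hunramified⟩ := exists_ne_zero_forall_notMem_inertia_eq_bot (𝓞 N) (N ≃ₐ[ℚ] N)
  have hfrob (p : primesNotDvd (D * n)) :
      ∃ σ : N ≃ₐ[ℚ] N, IsUnramifiedFrobenius (𝓞 N) (p : ℕ) σ :=
    exists_isUnramifiedFrobenius hunramified fun hp ↦ p.2.2 (hp.mul_left D)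
  choose τ hτ using hfrob
  have hcard := card_fixedBy_eq_of_hasDirichletAverage
    (hasDirichletAverage_card_fixedBy_quotient (mul_ne_zero hD hn) hτ)
    (X := (N ≃ₐ[ℚ] N) ⧸ U) (Y := (N ≃ₐ[ℚ] N) ⧸ V) fun p ↦ by
      rw [← primeCount_eq_card_fixedBy (E := K) (hτ p),
        ← primeCount_eq_card_fixedBy (E := L) (hτ p), h p p.2.1 fun hp ↦ p.2.2 (hp.mul_right n)]
  have : IsGaloisGroup U (𝓞 K) (𝓞 N) := IsGaloisGroup.of_isFractionRing U (𝓞 K) (𝓞 N) K N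
  have : IsGaloisGroup V (𝓞 L) (𝓞 N) := IsGaloisGroup.of_isFractionRing V (𝓞 L) (𝓞 N) L N
  exact primeCount_eq_of_finiteFieldPointCount_eq
    (finiteFieldPointCount_eq_of_card_fixedBy_eq (B := 𝓞 N) hcard) q

theorem tsum_absNorm_rpow_eq_of_primeCount_eq {K L : Type*} [Field K] [NumberField K] [Field L]
    [NumberField L] (h : ∀ q, primeCount K q = primeCount L q) {s : ℝ} (hs : 1 < s) :
    (∑' I : {I : Ideal (𝓞 K) // I ≠ 0}, (Ideal.absNorm I.1 : ℝ) ^ (-s)) =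
      ∑' J : {J : Ideal (𝓞 L) // J ≠ 0}, (Ideal.absNorm J.1 : ℝ) ^ (-s) := by
  obtain ⟨e, he⟩ := exists_equiv_absNorm_eq h
  refine (hasProd_absNorm_rpow K hs).unique ?_
  simpa only [Function.comp_def, he] using e.hasProd_iff.mpr (hasProd_absNorm_rpow L hs)

end Comparison

section Modulus

theorem add_eq_top_of_absNorm_eq_prime {R : Type*} [CommRing R] [IsDedekindDomain R]
    [Module.Free ℤ R] {I 𝔪 : Ideal R} (hI : (Ideal.absNorm I).Prime)
    (hdvd : ¬ Ideal.absNorm I ∣ Ideal.absNorm 𝔪) : I + 𝔪 = ⊤ := by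
  have hprime := Ideal.isPrime_of_irreducible_absNorm hI
  have hmax := hprime.isMaximal (fun h ↦ by simp [h, Nat.not_prime_zero] at hI)
  by_contra hne
  have hle : I + 𝔪 = I := (hmax.eq_of_le hne le_sup_left).symm
  exact hdvd (Ideal.absNorm_dvd_absNorm_of_le (le_sup_right.trans hle.le))

variable {E : Type*} [Field E] [NumberField E]

theorem natCard_coprime_ideal_absNorm_eq_prime {𝔪 : Ideal (𝓞 E)} {p : ℕ} (hp : p.Prime)
    (hdvd : ¬ p ∣ Ideal.absNorm 𝔪) :
    Nat.card {I : {I : Ideal (𝓞 E) // I ≠ 0 ∧ I + 𝔪 = ⊤} // Ideal.absNorm I.1 = p} =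
      primeCount E p :=
  Nat.card_congr
    { toFun I := ⟨⟨I.1.1, Ideal.isPrime_of_irreducible_absNorm (I.2.symm ▸ hp), I.1.2.1⟩, I.2⟩
      invFun P := ⟨⟨P.1.asIdeal, P.1.ne_bot,
        add_eq_top_of_absNorm_eq_prime (P.2.symm ▸ hp) (P.2.symm ▸ hdvd)⟩, P.2⟩ }

instance finite_coprime_ideal_absNorm_eq (𝔪 : Ideal (𝓞 E)) (n : ℕ) :
    Finite {I : {I : Ideal (𝓞 E) // I ≠ 0 ∧ I + 𝔪 = ⊤} // Ideal.absNorm I.1 = n} :=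
  Finite.of_injective (β := {I : {I : Ideal (𝓞 E) // I ≠ 0} // Ideal.absNorm I.1 = n})
    (fun I ↦ ⟨⟨I.1.1, I.1.2.1⟩, I.2⟩) fun _ _ h ↦ by
      simpa [Subtype.ext_iff] using h

theorem summable_coprime_absNorm_rpow (𝔪 : Ideal (𝓞 E)) {s : ℝ} (hs : 1 < s) :
    Summable fun I : {I : Ideal (𝓞 E) // I ≠ 0 ∧ I + 𝔪 = ⊤} ↦ (Ideal.absNorm I.1 : ℝ) ^ (-s) :=
  (summable_absNorm_rpow hs).comp_injective
    (i := fun I : {I : Ideal (𝓞 E) // I ≠ 0 ∧ I + 𝔪 = ⊤} ↦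
      (⟨I.1, I.2.1⟩ : {I : Ideal (𝓞 E) // I ≠ 0}))
    fun _ _ h ↦ Subtype.ext (Subtype.mk.inj h)

end Modulus

/-- If the zeta functions of the moduli `𝔪` and `𝔫` of the number fields `K` and `L` agree
on `(1, ∞)` (the sums running over nonzero ideals relatively prime to the modulus), then the
Dedekind zeta functions of `K` and `L` agree on `(1, ∞)`. -/
theorem dedekind_zeta_eq_of_modulus_zeta_eq
    (K L : Type*) [Field K] [NumberField K] [Field L] [NumberField L]
    (𝔪 : Ideal (𝓞 K)) (h𝔪 : 𝔪 ≠ 0) (𝔫 : Ideal (𝓞 L)) (h𝔫 : 𝔫 ≠ 0)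
    (h : ∀ s : ℝ, 1 < s →
      (∑' I : {I : Ideal (𝓞 K) // I ≠ 0 ∧ I + 𝔪 = ⊤}, (Ideal.absNorm I.1 : ℝ) ^ (-s)) =
        ∑' J : {J : Ideal (𝓞 L) // J ≠ 0 ∧ J + 𝔫 = ⊤}, (Ideal.absNorm J.1 : ℝ) ^ (-s)) :
    ∀ s : ℝ, 1 < s →
      (∑' I : {I : Ideal (𝓞 K) // I ≠ 0}, (Ideal.absNorm I.1 : ℝ) ^ (-s)) =
        ∑' J : {J : Ideal (𝓞 L) // J ≠ 0}, (Ideal.absNorm J.1 : ℝ) ^ (-s) := by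
  intro s hs
  have hD : Ideal.absNorm 𝔪 * Ideal.absNorm 𝔫 ≠ 0 :=
    mul_ne_zero (absNorm_ne_zero_of_ne_zero ⟨𝔪, h𝔪⟩) (absNorm_ne_zero_of_ne_zero ⟨𝔫, h𝔫⟩)
  refine tsum_absNorm_rpow_eq_of_primeCount_eq
    (primeCount_eq_of_forall_not_dvd hD fun p hp hdvd ↦ ?_) hs
  rw [← natCard_coprime_ideal_absNorm_eq_prime (𝔪 := 𝔪) hp fun hd ↦ hdvd (hd.mul_right _),
    ← natCard_coprime_ideal_absNorm_eq_prime (𝔪 := 𝔫) hp fun hd ↦ hdvd (hd.mul_left _)]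
  exact natCard_fiber_eq_of_tsum_rpow_eq
    (w := fun I : {I : Ideal (𝓞 K) // I ≠ 0 ∧ I + 𝔪 = ⊤} ↦ Ideal.absNorm I.1)
    (v := fun J : {J : Ideal (𝓞 L) // J ≠ 0 ∧ J + 𝔫 = ⊤} ↦ Ideal.absNorm J.1)
    (fun I ↦ absNorm_ne_zero_of_ne_zero ⟨I.1, I.2.1⟩)
    (fun J ↦ absNorm_ne_zero_of_ne_zero ⟨J.1, J.2.1⟩) (fun _ ↦ summable_coprime_absNorm_rpow 𝔪)
    (fun _ ↦ summable_coprime_absNorm_rpow 𝔫) h hp.ne_zero
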